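/- arXiv:2004.09498 — 2 statements merged into one kernel-verified Lean document; each statement's English description precedes it below -/
import Mathlib

section
/- (Theorem 1, scalable state synchronization with full-state coupling.) Let A ∈ ℝ^{n×n} have all its eigenvalues in the closed unit disc of ℂ, let B ∈ ℝ^{n×m}, and let K ∈ ℝ^{m×n} be such that A − BK is Schur stable. Let N ≥ 2 and let D = [d_ij] ∈ ℝ^{N×N} be a row stochastic matrix such that 1 is an algebraically simple eigenvalue of D and every other eigenvalue of D has modulus strictly less than 1. Consider, for i = 1,…,N, sequences x_i, η_i : ℕ → ℝⁿ satisfying the agent dynamics x_i(k+1) = A x_i(k) + B u_i(k) and the protocol dynamics η_i(k+1) = A η_i(k) + B u_i(k) + A ζ_i(k) − A ζ̂_i(k), u_i(k) = −K η_i(k), where ζ_i(k) = Σ_{j=1}^N d_ij (x_i(k) − x_j(k)) and ζ̂_i(k) = Σ_{j=1}^N d_ij (η_i(k) − η_j(k)). Then for all initial conditions x_i(0), η_i(0) ∈ ℝⁿ, state synchronization is achieved: lim_{k→∞} (x_i(k) − x_j(k)) = 0 for all i, j ∈ {1,…,N}. -/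
/-!
Write `e i = x i - η i`. Since the rows of `D` sum to `1`, the protocol gives
`e i (k+1) = A (∑ j, D i j • e j k)`: stacking the `e i` as the rows of a matrix `E`, this reads
`E (k+1) = D * E k * Aᵀ`. Fix an agent `j`, and let `Q = 1 - 𝟏 * e_jᵀ` be the operator that
subtracts row `j` from every row. As `D 𝟏 = 𝟏`, `Q * D = (Q * D) * Q`, so
`Q * E k = (Q * D) ^ k * (Q * E 0) * Aᵀ ^ k`. Passing from `D` to `Q * D` deflates the eigenvalue
`1`: every eigenvalue of `Q * D` lies in the open unit disc (`norm_lt_one_of_deflate`; simplicity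
of `1` is what excludes a Jordan chain starting at `𝟏`). By Gelfand's formula
(`exists_norm_pow_le`), `(Q * D) ^ k` decays geometrically, while `Aᵀ ^ k` grows more slowly than
`s ^ k` for any prescribed `s > 1`; hence `Q * E k` decays geometrically.

The state differences `Q * X k` obey `Q * X (k+1) = Q * X k * (A - B K)ᵀ + Q * E k * (B K)ᵀ`, a
Schur stable recursion with a geometrically decaying input, so they tend to zero
(`tendsto_zero_of_stable_recursion`).
-/

open Filter Topology

section Aux

open Matrix
open scoped Matrix.Norms.Operator NNReal ENNReal

/-! ### Spectrum and growth of matrix powers -/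

lemma exists_eigenvector_of_mem_spectrum {n : ℕ} {A : Matrix (Fin n) (Fin n) ℂ} {μ : ℂ}
    (h : μ ∈ spectrum ℂ A) : ∃ x : Fin n → ℂ, x ≠ 0 ∧ A.mulVec x = μ • x := by
  rw [← Matrix.spectrum_toLin', ← Module.End.hasEigenvalue_iff_mem_spectrum] at h
  obtain ⟨v, hv⟩ := h.exists_hasEigenvector
  exact ⟨v, hv.2, by simpa using hv.apply_eq_smul⟩

lemma mem_spectrum_transpose {n : ℕ} {A : Matrix (Fin n) (Fin n) ℂ} {μ : ℂ}
    (h : μ ∈ spectrum ℂ Aᵀ) : μ ∈ spectrum ℂ A := by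
  rw [Matrix.mem_spectrum_iff_isRoot_charpoly] at h ⊢
  rwa [Matrix.charpoly_transpose] at h

lemma linfty_opNorm_map_ofReal {m n : ℕ} (A : Matrix (Fin m) (Fin n) ℝ) :
    ‖A.map Complex.ofReal‖ = ‖A‖ := by
  simp [Matrix.linfty_opNorm_def]

/-- Powers of a real matrix whose complex eigenvalues all have modulus less than `r` are dominated
by a geometric sequence of ratio strictly smaller than `r`. -/
lemma exists_norm_pow_le {n : ℕ} (A : Matrix (Fin n) (Fin n) ℝ) {r : ℝ} (hr : 0 < r)
    (h : ∀ μ ∈ spectrum ℂ (A.map Complex.ofReal), ‖μ‖ < r) :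
    ∃ q : ℝ, 0 < q ∧ q < r ∧ ∃ C : ℝ, 0 < C ∧ ∀ k : ℕ, ‖A ^ k‖ ≤ C * q ^ k := by
  set a := A.map Complex.ofReal with ha
  have hpow : ∀ k, ‖A ^ k‖ = ‖a ^ k‖ := by
    intro k
    rw [← linfty_opNorm_map_ofReal]
    congr 1
    exact map_pow (Complex.ofRealHom.mapMatrix) A k
  lift r to ℝ≥0 using hr.le
  have hrad : spectralRadius ℂ a < r := by
    rcases (spectrum ℂ a).eq_empty_or_nonempty with h0 | h0
    · simpa [spectralRadius, h0] using hr
    · exact spectrum.spectralRadius_lt_of_forall_lt_of_nonempty h0 h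
  obtain ⟨q, hq1, hq2⟩ := ENNReal.lt_iff_exists_nnreal_btwn.1 hrad
  have hq0 : 0 < q := by
    have := (zero_le (a := spectralRadius ℂ a)).trans_lt hq1
    exact_mod_cast this
  have hO : (fun k : ℕ => a ^ k) =O[atTop] fun k : ℕ => (q : ℝ) ^ k := by
    refine Asymptotics.IsBigO.of_bound 1 ?_
    filter_upwards [(spectrum.pow_nnnorm_pow_one_div_tendsto_nhds_spectralRadius a).eventually_lt_const
      hq1, eventually_ge_atTop 1] with k hk hk1
    have hk0 : (0 : ℝ) < k := by exact_mod_cast hk1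
    rw [one_div, ENNReal.rpow_inv_lt_iff hk0, ENNReal.rpow_natCast] at hk
    have : ‖a ^ k‖₊ < q ^ k := by exact_mod_cast hk
    have h3 : ‖a ^ k‖ < (q : ℝ) ^ k := by exact_mod_cast this
    simpa using h3.le
  obtain ⟨C, hC, hb⟩ := Asymptotics.bound_of_isBigO_nat_atTop hO
  have hq0' : (0 : ℝ) < q := by exact_mod_cast hq0
  refine ⟨q, hq0', by exact_mod_cast hq2, C, hC, fun k => ?_⟩
  have := hb (x := k) (by positivity)
  rw [hpow]
  simpa using this

/-! ### Stable recursions with decaying input -/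

/-- A stable linear recursion driven by a geometrically decaying input tends to zero. The state
acts on the right, each row of `Y k` being one copy of the system. -/
lemma tendsto_zero_of_stable_recursion {N n : ℕ} (F : Matrix (Fin n) (Fin n) ℝ)
    (Y G : ℕ → Matrix (Fin N) (Fin n) ℝ) {q C C' : ℝ} (hq0 : 0 < q) (hq1 : q < 1) (hC : 0 < C)
    (hY : ∀ k, Y (k + 1) = Y k * F + G k)
    (hF : ∀ k, ‖F ^ k‖ ≤ C * q ^ k) (hG : ∀ k, ‖G k‖ ≤ C' * q ^ k) :
    Tendsto (fun k => ‖Y k‖) atTop (𝓝 0) := by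
  -- Carrying along the extra factor `F ^ p` makes the variation-of-constants bound inductive.
  have key : ∀ k p : ℕ, ‖Y k * F ^ p‖ ≤ (‖Y 0‖ * C + k * (C' * C / q)) * q ^ (k + p) := by
    intro k
    induction k with
    | zero =>
      intro p
      calc ‖Y 0 * F ^ p‖ ≤ ‖Y 0‖ * ‖F ^ p‖ := Matrix.linfty_opNorm_mul _ _
        _ ≤ ‖Y 0‖ * (C * q ^ p) := by gcongr; exact hF p
        _ = _ := by simp; ring
    | succ k ih =>
      intro p
      have e : Y (k + 1) * F ^ p = Y k * F ^ (p + 1) + G k * F ^ p := by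
        rw [hY, Matrix.add_mul, Matrix.mul_assoc, pow_succ']
      calc ‖Y (k + 1) * F ^ p‖ ≤ ‖Y k * F ^ (p + 1)‖ + ‖G k * F ^ p‖ := by
            rw [e]; exact norm_add_le _ _
        _ ≤ (‖Y 0‖ * C + k * (C' * C / q)) * q ^ (k + (p + 1)) + (C' * q ^ k) * (C * q ^ p) := by
            refine add_le_add (ih _) ((Matrix.linfty_opNorm_mul _ _).trans ?_)
            exact mul_le_mul (hG k) (hF p) (norm_nonneg _) ((norm_nonneg _).trans (hG k))
        _ = _ := by
            push_cast
            field_simp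
            ring
  have hlim : Tendsto (fun k : ℕ => (‖Y 0‖ * C + k * (C' * C / q)) * q ^ k) atTop (𝓝 0) := by
    have h1 := (tendsto_pow_atTop_nhds_zero_of_lt_one hq0.le hq1).const_mul (‖Y 0‖ * C)
    have h2 := (tendsto_self_mul_const_pow_of_lt_one hq0.le hq1).const_mul (C' * C / q)
    refine (by simpa using h1.add h2 : Tendsto _ _ _).congr fun k => ?_
    ring
  refine squeeze_zero (fun _ => norm_nonneg _) (fun k => ?_) hlim
  simpa using key k 0

/-! ### Deflating the eigenvalue 1 -/

/-- If `1` is a simple eigenvalue of `D` with eigenvector `𝟏`, no vector outside the line of `𝟏`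
is mapped by `D - 1` into that line. -/
lemma eq_zero_of_jordan_chain {N : ℕ} (D : Matrix (Fin N) (Fin N) ℂ) (i₀ : Fin N)
    (h1 : D.mulVec 1 = 1) (hs : D.charpoly.rootMultiplicity 1 = 1)
    (v : Fin N → ℂ) (hv0 : v i₀ = 0) (c : ℂ) (hv : D.mulVec v = v + c • (1 : Fin N → ℂ)) :
    v = 0 := by
  have hfr := LinearMap.finrank_maxGenEigenspace_eq D.toLin' 1
  rw [Matrix.charpoly_toLin', hs] at hfr
  have m1 : (1 : Fin N → ℂ) ∈ Module.End.maxGenEigenspace D.toLin' 1 := by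
    rw [Module.End.mem_maxGenEigenspace]
    exact ⟨1, by simp [h1]⟩
  have mv : v ∈ Module.End.maxGenEigenspace D.toLin' 1 := by
    rw [Module.End.mem_maxGenEigenspace]
    exact ⟨2, by simp [pow_two, hv, h1]⟩
  have hne : (⟨1, m1⟩ : Module.End.maxGenEigenspace D.toLin' 1) ≠ 0 := by
    intro h
    have := congrFun (congrArg Subtype.val h) i₀
    simp at this
  obtain ⟨a, ha⟩ := (finrank_eq_one_iff_of_nonzero' _ hne).1 hfr ⟨v, mv⟩
  have ha' : a • (1 : Fin N → ℂ) = v := congrArg Subtype.val ha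
  have : a = 0 := by simpa [hv0] using congrFun ha' i₀
  rw [← ha', this, zero_smul]

/-- The operator subtracting entry `i₀` from every entry, i.e. `1 - 𝟏 * e_{i₀}ᵀ`. -/
def diffMatrix {N : ℕ} (i₀ : Fin N) : Matrix (Fin N) (Fin N) ℝ :=
  Matrix.of fun i j => (if i = j then 1 else 0) - (if i₀ = j then 1 else 0)

lemma diffMatrix_mul_apply {N n : ℕ} (i₀ : Fin N) (E : Matrix (Fin N) (Fin n) ℝ) (i : Fin N)
    (l : Fin n) : (diffMatrix i₀ * E) i l = E i l - E i₀ l := by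
  simp [diffMatrix, Matrix.mul_apply, sub_mul, Finset.sum_sub_distrib]

/-- A row sum equal to `1` lets `D` descend to the quotient by the line of `𝟏`. -/
lemma diffMatrix_mul_mul_diffMatrix {N : ℕ} (i₀ : Fin N) (D : Matrix (Fin N) (Fin N) ℝ)
    (hDrow : ∀ i, ∑ j, D i j = 1) :
    diffMatrix i₀ * D * diffMatrix i₀ = diffMatrix i₀ * D := by
  ext i j
  rw [Matrix.mul_assoc, diffMatrix_mul_apply, diffMatrix_mul_apply]
  have : ∀ i, (D * diffMatrix i₀) i j = D i j - (if i₀ = j then 1 else 0) := by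
    intro i
    simp only [diffMatrix, Matrix.mul_apply, Matrix.of_apply, mul_sub, Finset.sum_sub_distrib,
      ← Finset.sum_mul, hDrow]
    simp
  rw [this, this]
  ring

/-- The eigenvalues of the deflated matrix `Q * D` lie in the open unit disc. An eigenvector of
`Q * D` for `μ ≠ 1` becomes one of `D` after adding a multiple of `𝟏`; for `μ = 1` it would extend
`𝟏` to a Jordan chain. -/
lemma norm_lt_one_of_deflate {N : ℕ} (i₀ : Fin N) (D : Matrix (Fin N) (Fin N) ℝ)
    (hDrow : ∀ i, ∑ j, D i j = 1)
    (hDsimple : Polynomial.rootMultiplicity (1 : ℂ)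
        (Matrix.charpoly (D.map Complex.ofReal)) = 1)
    (hDspec : ∀ μ : ℂ, (∃ x : Fin N → ℂ, x ≠ 0 ∧
        (D.map Complex.ofReal).mulVec x = μ • x) → μ ≠ 1 → ‖μ‖ < 1)
    (μ : ℂ) (hμ : μ ∈ spectrum ℂ ((diffMatrix i₀ * D).map Complex.ofReal)) : ‖μ‖ < 1 := by
  obtain ⟨v, hv, hMv⟩ := exists_eigenvector_of_mem_spectrum hμ
  set Dc := D.map Complex.ofReal with hDc
  have h1 : Dc.mulVec 1 = 1 := by
    ext i
    simpa [hDc, Matrix.mulVec, dotProduct] using congrArg Complex.ofReal (hDrow i)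
  have hrow : ∀ i, Dc.mulVec v i - Dc.mulVec v i₀ = μ * v i := by
    intro i
    have := congrFun hMv i
    simpa [Matrix.mulVec, dotProduct, diffMatrix_mul_apply, sub_mul, Finset.sum_sub_distrib,
      hDc] using this
  by_cases h0 : μ = 0
  · simp [h0]
  have hv0 : v i₀ = 0 := by
    have := hrow i₀
    rw [sub_self] at this
    exact (mul_eq_zero.1 this.symm).resolve_left h0
  set c := Dc.mulVec v i₀ with hc
  have hDv : Dc.mulVec v = μ • v + c • (1 : Fin N → ℂ) := by
    ext i
    simp [← hrow i]
  by_cases hμ1 : μ = 1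
  · subst hμ1
    exact absurd (eq_zero_of_jordan_chain Dc i₀ h1 hDsimple v hv0 c (by simpa using hDv)) hv
  have hne : μ - 1 ≠ 0 := sub_ne_zero.2 hμ1
  refine hDspec μ ⟨v + (c / (μ - 1)) • (1 : Fin N → ℂ), ?_, ?_⟩ hμ1
  · intro h
    have ha : c / (μ - 1) = 0 := by simpa [hv0] using congrFun h i₀
    rw [ha] at h
    exact hv (by simpa using h)
  · rw [Matrix.mulVec_add, Matrix.mulVec_smul, h1, hDv]
    ext i
    simp
    field_simp
    ring

/-! ### Decay of the disagreement -/

lemma entry_norm_le {m n : ℕ} (A : Matrix (Fin m) (Fin n) ℝ) (i : Fin m) (j : Fin n) :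
    ‖A i j‖ ≤ ‖A‖ := by
  have h1 : ‖A i j‖₊ ≤ ∑ j, ‖A i j‖₊ :=
    Finset.single_le_sum (f := fun j => ‖A i j‖₊) (fun _ _ => zero_le) (Finset.mem_univ j)
  have h2 : ∑ j, ‖A i j‖₊ ≤ ‖A‖₊ := by
    rw [Matrix.linfty_opNNNorm_def]
    exact Finset.le_sup (f := fun i => ∑ j, ‖A i j‖₊) (Finset.mem_univ i)
  exact_mod_cast h1.trans h2

/-- The disagreement of solutions of `E (k+1) = D * E k * Aᵀ` decays geometrically. -/
lemma exists_norm_diff_le {N n : ℕ} (i₀ : Fin N) (D : Matrix (Fin N) (Fin N) ℝ)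
    (A : Matrix (Fin n) (Fin n) ℝ) (E : ℕ → Matrix (Fin N) (Fin n) ℝ)
    (hDrow : ∀ i, ∑ j, D i j = 1)
    (hM : ∀ μ ∈ spectrum ℂ ((diffMatrix i₀ * D).map Complex.ofReal), ‖μ‖ < 1)
    (hA : ∀ μ ∈ spectrum ℂ (A.map Complex.ofReal), ‖μ‖ ≤ 1)
    (hE : ∀ k, E (k + 1) = D * E k * Aᵀ) :
    ∃ q : ℝ, 0 < q ∧ q < 1 ∧ ∃ C : ℝ, 0 ≤ C ∧ ∀ k, ‖diffMatrix i₀ * E k‖ ≤ C * q ^ k := by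
  obtain ⟨q, hq0, hq1, C, hC, hb⟩ := exists_norm_pow_le _ one_pos hM
  -- The growth rate allowed for `Aᵀ ^ k` is any ratio below `1 / q`, which exceeds `1`.
  obtain ⟨s, hs0, hs1, C', hC', hb'⟩ := exists_norm_pow_le Aᵀ (inv_pos.2 hq0) (by
    intro μ hμ
    exact (hA μ (mem_spectrum_transpose hμ)).trans_lt ((one_lt_inv₀ hq0).2 hq1))
  have hform : ∀ k, diffMatrix i₀ * E k
      = (diffMatrix i₀ * D) ^ k * (diffMatrix i₀ * E 0) * Aᵀ ^ k := by
    intro k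
    induction k with
    | zero => simp
    | succ k ih =>
      calc diffMatrix i₀ * E (k + 1) = (diffMatrix i₀ * D * diffMatrix i₀) * E k * Aᵀ := by
            rw [diffMatrix_mul_mul_diffMatrix i₀ D hDrow, hE]
            simp only [Matrix.mul_assoc]
        _ = (diffMatrix i₀ * D) * (diffMatrix i₀ * E k) * Aᵀ := by
            simp only [Matrix.mul_assoc]
        _ = _ := by
            rw [ih, pow_succ', pow_succ]
            simp only [Matrix.mul_assoc]
  refine ⟨q * s, by positivity, ?_, C * ‖diffMatrix i₀ * E 0‖ * C', by positivity, fun k => ?_⟩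
  · calc q * s < q * q⁻¹ := by gcongr
      _ = 1 := mul_inv_cancel₀ hq0.ne'
  · rw [hform]
    calc _ ≤ ‖(diffMatrix i₀ * D) ^ k‖ * ‖diffMatrix i₀ * E 0‖ * ‖Aᵀ ^ k‖ :=
          (Matrix.linfty_opNorm_mul _ _).trans
            (mul_le_mul_of_nonneg_right (Matrix.linfty_opNorm_mul _ _) (norm_nonneg _))
      _ ≤ (C * q ^ k) * ‖diffMatrix i₀ * E 0‖ * (C' * s ^ k) := by
          gcongr
          · exact hb k
          · exact hb' k
      _ = _ := by rw [mul_pow]; ring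

/-- Synchronization in stacked form, agents being the rows of `X` (states) and `E` (protocol
errors). -/
lemma tendsto_norm_diff {N n : ℕ} (i₀ : Fin N) (D : Matrix (Fin N) (Fin N) ℝ)
    (A L : Matrix (Fin n) (Fin n) ℝ) (X E : ℕ → Matrix (Fin N) (Fin n) ℝ)
    (hDrow : ∀ i, ∑ j, D i j = 1)
    (hM : ∀ μ ∈ spectrum ℂ ((diffMatrix i₀ * D).map Complex.ofReal), ‖μ‖ < 1)
    (hA : ∀ μ ∈ spectrum ℂ (A.map Complex.ofReal), ‖μ‖ ≤ 1)
    (hAL : ∀ μ ∈ spectrum ℂ ((A - L).map Complex.ofReal), ‖μ‖ < 1)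
    (hE : ∀ k, E (k + 1) = D * E k * Aᵀ)
    (hX : ∀ k, X (k + 1) = X k * (A - L)ᵀ + E k * Lᵀ) :
    Tendsto (fun k => ‖diffMatrix i₀ * X k‖) atTop (𝓝 0) := by
  obtain ⟨q, hq0, hq1, C, hC, hb⟩ := exists_norm_diff_le i₀ D A E hDrow hM hA hE
  obtain ⟨t, ht0, ht1, C', hC', hb'⟩ := exists_norm_pow_le (A - L)ᵀ one_pos
    fun μ hμ => hAL μ (mem_spectrum_transpose hμ)
  refine tendsto_zero_of_stable_recursion (A - L)ᵀ (fun k => diffMatrix i₀ * X k)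
    (fun k => diffMatrix i₀ * E k * Lᵀ) (q := max q t) (C := C') (C' := C * ‖Lᵀ‖)
    (lt_max_of_lt_left hq0) (max_lt hq1 ht1) hC' ?_ ?_ ?_
  · intro k
    simp only [hX, Matrix.mul_add, Matrix.mul_assoc]
  · intro k
    refine (hb' k).trans ?_
    gcongr
    exact le_max_right _ _
  · intro k
    calc ‖diffMatrix i₀ * E k * Lᵀ‖ ≤ ‖diffMatrix i₀ * E k‖ * ‖Lᵀ‖ := Matrix.linfty_opNorm_mul _ _
      _ ≤ (C * (max q t) ^ k) * ‖Lᵀ‖ := by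
          gcongr
          refine (hb k).trans ?_
          gcongr
          exact le_max_left _ _
      _ = _ := by ring

end Aux


/-
STATEMENT 5 (Theorem 1): scalable state synchronization with full-state coupling.
A has all eigenvalues in the closed unit disc, A − BK is Schur stable, D is row
stochastic with 1 an algebraically simple eigenvalue and all other eigenvalues of
modulus < 1.  Agents x_i(k+1) = A x_i(k) + B u_i(k), protocol
η_i(k+1) = A η_i(k) + B u_i(k) + A ζ_i(k) − A ζ̂_i(k), u_i = −K η_i, with
ζ_i = Σ_j d_ij (x_i − x_j), ζ̂_i = Σ_j d_ij (η_i − η_j).  Then state synchronization: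
x_i(k) − x_j(k) → 0 for all i, j.
-/
theorem full_state_coupling_synchronization
    (n m : ℕ)
    (A : Matrix (Fin n) (Fin n) ℝ) (B : Matrix (Fin n) (Fin m) ℝ)
    (K : Matrix (Fin m) (Fin n) ℝ)
    (hA : ∀ μ : ℂ, (∃ x : Fin n → ℂ, x ≠ 0 ∧
        (A.map Complex.ofReal).mulVec x = μ • x) → ‖μ‖ ≤ 1)
    (hABK : ∀ μ : ℂ, (∃ x : Fin n → ℂ, x ≠ 0 ∧
        ((A - B * K).map Complex.ofReal).mulVec x = μ • x) → ‖μ‖ < 1)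
    (N : ℕ) (hN : 2 ≤ N)
    (D : Matrix (Fin N) (Fin N) ℝ)
    (hDpos : ∀ i j, 0 ≤ D i j)
    (hDrow : ∀ i, ∑ j, D i j = 1)
    (hDsimple : Polynomial.rootMultiplicity (1 : ℂ)
        (Matrix.charpoly (D.map Complex.ofReal)) = 1)
    (hDspec : ∀ μ : ℂ, (∃ x : Fin N → ℂ, x ≠ 0 ∧
        (D.map Complex.ofReal).mulVec x = μ • x) → μ ≠ 1 → ‖μ‖ < 1)
    (x η : Fin N → ℕ → Fin n → ℝ)
    (hx : ∀ i k, x i (k + 1) = A.mulVec (x i k) + B.mulVec (-(K.mulVec (η i k))))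
    (hη : ∀ i k, η i (k + 1) =
        A.mulVec (η i k) + B.mulVec (-(K.mulVec (η i k)))
          + A.mulVec (∑ j, D i j • (x i k - x j k))
          - A.mulVec (∑ j, D i j • (η i k - η j k))) :
    ∀ i j, Filter.Tendsto (fun k => x i k - x j k) Filter.atTop (nhds 0) := by
  intro i j
  have hlim := tendsto_norm_diff j D A (B * K) (fun k => Matrix.of fun i => x i k)
    (fun k => Matrix.of fun i => x i k - η i k) hDrow
    (norm_lt_one_of_deflate j D hDrow hDsimple hDspec)
    (fun μ hμ => hA μ (exists_eigenvector_of_mem_spectrum hμ))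
    (fun μ hμ => hABK μ (exists_eigenvector_of_mem_spectrum hμ)) ?_ ?_
  · rw [tendsto_pi_nhds]
    intro l
    refine squeeze_zero_norm (fun k => ?_) hlim
    have := entry_norm_le (diffMatrix j * Matrix.of fun i => x i k) i l
    rw [diffMatrix_mul_apply] at this
    simpa using this
  · intro k
    have hsum : ∀ (y : Fin N → Fin n → ℝ) (i : Fin N),
        ∑ j, D i j • (y i - y j) = y i - ∑ j, D i j • y j := by
      intro y i
      simp only [smul_sub, Finset.sum_sub_distrib, ← Finset.sum_smul, hDrow, one_smul]
    have he : ∀ i, x i (k + 1) - η i (k + 1) = A.mulVec (∑ j, D i j • (x j k - η j k)) := by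
      intro i
      rw [hx, hη, hsum (fun j => x j k), hsum (fun j => η j k)]
      simp only [smul_sub, Finset.sum_sub_distrib, Matrix.mulVec_sub]
      abel
    ext i l
    have hrow : (D * Matrix.of fun i => x i k - η i k) i = ∑ j, D i j • (x j k - η j k) := by
      ext l
      simp [Matrix.mul_apply]
    rw [Matrix.of_apply, he, ← hrow]
    simp only [Matrix.mul_apply, Matrix.mulVec, dotProduct, Matrix.transpose_apply]
    exact Finset.sum_congr rfl fun _ _ => mul_comm _ _
  · intro k
    have h1 : ∀ i, x i (k + 1)
        = (A - B * K).mulVec (x i k) + (B * K).mulVec (x i k - η i k) := by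
      intro i
      rw [hx, Matrix.sub_mulVec, Matrix.mulVec_sub, Matrix.mulVec_neg, Matrix.mulVec_mulVec]
      abel
    ext i l
    rw [Matrix.of_apply, h1, Matrix.add_apply, Pi.add_apply]
    congr 1
    · simp only [Matrix.mul_apply, Matrix.mulVec, dotProduct, Matrix.transpose_apply]
      exact Finset.sum_congr rfl fun _ _ => mul_comm _ _
    · rw [Matrix.mul_apply]
      simp only [Matrix.mulVec, dotProduct, Matrix.transpose_apply]
      exact Finset.sum_congr rfl fun _ _ => mul_comm _ _
end

section
/- (Theorem 2, scalable state synchronization with partial-state coupling.) Let A ∈ ℝ^{n×n} have all its eigenvalues in the closed unit disc of ℂ, let B ∈ ℝ^{n×m} and C ∈ ℝ^{p×n}, and suppose K ∈ ℝ^{m×n} and H ∈ ℝ^{n×p} are such that A − BK and A − HC are both Schur stable. Let N ≥ 2 and let D = [d_ij] ∈ ℝ^{N×N} be a row stochastic matrix such that 1 is an algebraically simple eigenvalue of D and every other eigenvalue of D has modulus strictly less than 1. Consider, for i = 1,…,N, sequences x_i, η_i, x̂_i : ℕ → ℝⁿ satisfying the agent dynamics x_i(k+1) = A x_i(k) + B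 u_i(k), y_i(k) = C x_i(k), and the protocol dynamics η_i(k+1) = A η_i(k) + B u_i(k) + A x̂_i(k) − A ζ̂_i(k), x̂_i(k+1) = A x̂_i(k) − BK ζ̂_i(k) + H(ζ_i(k) − C x̂_i(k)), u_i(k) = −K η_i(k), where ζ_i(k) = Σ_{j=1}^N d_ij (y_i(k) − y_j(k)) and ζ̂_i(k) = Σ_{j=1}^N d_ij (η_i(k) − η_j(k)). Then for all initial conditions, lim_{k→∞} (x_i(k) − x_j(k)) = 0 for all i, j ∈ {1,…,N}. -/
/-!
Write `X`, `Y`, `Xh` for the `N × n` matrices whose rows are the `x_i`, `η_i`, `x̂_i`, and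
`L = 1 - D`. In these variables the closed loop is a cascade:

* the observer error `E = L X - Xh` obeys `E⁺ = E (A - H C)ᵀ`, so `E → 0`;
* `Δ = X - Y` obeys `Δ⁺ = D Δ Aᵀ + E Aᵀ`. Let `P` subtract a reference row `j` from every row.
  Since `D` is row stochastic, `P D P = P D`, hence `V = P Δ` obeys
  `V⁺ = (P D) V Aᵀ + P E Aᵀ`;
* `W = P X`, whose rows are `x_i - x_j`, obeys `W⁺ = W (A - B K)ᵀ + V (B K)ᵀ`.

Each stage is a recursion `V⁺ = S V T + F` with `F → 0`, and `V → 0` follows as soon as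
`‖S ^ k‖ ≤ c s ^ k` and `‖T ^ k‖ ≤ d t ^ k` with `s t < 1` (`tendsto_zero_of_recursion`). These
bounds come from the eigenvalue hypotheses through Gelfand's formula (`exists_pow_norm_le`).

The remaining point is that `P D` is Schur stable (`norm_lt_one_of_disagreement`): an eigenvector
for an eigenvalue `μ ≠ 1` is, up to a multiple of the all-ones vector, an eigenvector of `D`, and
an eigenvector for `μ = 1` would be a generalized eigenvector of `D` at `1` independent of the
all-ones vector, contradicting simplicity. As `P D` decays like `s ^ k` with `s < 1` while `A`
grows at most like `t ^ k` for any `t > 1`, the second stage is covered as well.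
-/

open Filter Topology Matrix

section

attribute [local instance] Matrix.frobeniusNormedAddCommGroup Matrix.frobeniusNormedSpace
  Matrix.frobeniusNormedRing Matrix.frobeniusNormedAlgebra

/-! ### Growth of matrix powers -/

/-- If every eigenvalue lies in the open disc of radius `r`, Gelfand's formula gives a geometric
bound on the powers, at a rate strictly below `r`. -/
theorem exists_pow_norm_le {ι : Type*} [Fintype ι] [DecidableEq ι] (M : Matrix ι ι ℝ) (r : ℝ)
    (hr : 0 < r)
    (hM : ∀ μ : ℂ, (∃ x : ι → ℂ, x ≠ 0 ∧
        (M.map Complex.ofReal).mulVec x = μ • x) → ‖μ‖ < r) :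
    ∃ s c : ℝ, 0 < s ∧ s < r ∧ 0 < c ∧ ∀ k : ℕ, ‖M ^ k‖ ≤ c * s ^ k := by
  have key : ∃ s : ℝ, 0 < s ∧ s < r ∧ ∀ᶠ k : ℕ in atTop, ‖M ^ k‖ ≤ s ^ k := by
    rcases isEmpty_or_nonempty ι with h | h
    · refine ⟨r / 2, by linarith, by linarith, Eventually.of_forall fun k => ?_⟩
      rw [Subsingleton.elim (M ^ k) 0, norm_zero]
      positivity
    set Mc : Matrix ι ι ℂ := M.map Complex.ofReal with hMc
    have hcomplete : CompleteSpace (Matrix ι ι ℂ) := FiniteDimensional.complete ℂ _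
    lift r to NNReal using hr.le
    have hrad : spectralRadius ℂ Mc < (r : ENNReal) := by
      apply spectrum.spectralRadius_lt_of_forall_lt
      intro z hz
      rw [← Matrix.spectrum_toLin', ← Module.End.hasEigenvalue_iff_mem_spectrum] at hz
      obtain ⟨v, hv⟩ := hz.exists_hasEigenvector
      have := hM z ⟨v, hv.2, by simpa using hv.apply_eq_smul⟩
      exact_mod_cast this
    obtain ⟨s, hs1, hs2⟩ := ENNReal.lt_iff_exists_nnreal_btwn.1 hrad
    have hs0 : 0 < s := by
      have := lt_of_le_of_lt (zero_le) hs1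
      exact_mod_cast this
    refine ⟨s, hs0, by exact_mod_cast hs2, ?_⟩
    have hlim := spectrum.pow_nnnorm_pow_one_div_tendsto_nhds_spectralRadius Mc
    filter_upwards [hlim.eventually_lt_const hs1, eventually_gt_atTop 0] with k hk hk0
    have hk' : (‖Mc ^ k‖₊ : ENNReal) ≤ (s : ENNReal) ^ k := by
      have h1 := ENNReal.rpow_le_rpow hk.le (Nat.cast_nonneg k : (0 : ℝ) ≤ k)
      rwa [← ENNReal.rpow_mul, one_div, inv_mul_cancel₀ (by positivity), ENNReal.rpow_one,
        ENNReal.rpow_natCast] at h1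
    have hpow : Mc ^ k = (M ^ k).map Complex.ofReal :=
      (Matrix.map_pow M Complex.ofRealHom k).symm
    have h2 : ‖Mc ^ k‖ ≤ (s : ℝ) ^ k := by exact_mod_cast hk'
    rwa [hpow, Matrix.frobenius_norm_map_eq _ _ (fun a => by simp)] at h2
  obtain ⟨s, hs0, hsr, hs⟩ := key
  have hO : (fun k : ℕ => M ^ k) =O[atTop] fun k : ℕ => s ^ k :=
    Asymptotics.IsBigO.of_bound' (hs.mono fun k hk => hk.trans (le_abs_self _))
  obtain ⟨c, hc, hb⟩ := Asymptotics.bound_of_isBigO_nat_atTop hO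
  refine ⟨s, c, hs0, hsr, hc, fun k => ?_⟩
  simpa [abs_of_pos hs0] using hb (x := k) (by positivity)

theorem exists_pow_transpose_norm_le {ι : Type*} [Fintype ι] [DecidableEq ι] (M : Matrix ι ι ℝ)
    (r : ℝ) (hr : 0 < r)
    (hM : ∀ μ : ℂ, (∃ x : ι → ℂ, x ≠ 0 ∧
        (M.map Complex.ofReal).mulVec x = μ • x) → ‖μ‖ < r) :
    ∃ s c : ℝ, 0 < s ∧ s < r ∧ 0 < c ∧ ∀ k : ℕ, ‖Mᵀ ^ k‖ ≤ c * s ^ k := by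
  obtain ⟨s, c, h1, h2, h3, h4⟩ := exists_pow_norm_le M r hr hM
  refine ⟨s, c, h1, h2, h3, fun k => ?_⟩
  rw [← Matrix.transpose_pow, Matrix.frobenius_norm_transpose]
  exact h4 k

/-! ### Linear recursions driven by null sequences -/

/-- The convolution of a geometric sequence with a null sequence is a null sequence. -/
theorem tendsto_geometric_convolution (q : ℝ) (hq0 : 0 < q) (hq1 : q < 1) (b : ℕ → ℝ)
    (hb : Tendsto b atTop (𝓝 0)) :
    Tendsto (fun k => ∑ l ∈ Finset.range k, q ^ l * b (k - 1 - l)) atTop (𝓝 0) := by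
  obtain ⟨R, hR⟩ := hb.norm.bddAbove_range
  have hR' : ∀ k, ‖b k‖ ≤ R := fun k => hR ⟨k, rfl⟩
  have hdom := tendsto_tsum_of_dominated_convergence (𝓕 := atTop) (g := fun _ : ℕ => (0 : ℝ))
    (f := fun k l => if l ∈ Finset.range k then q ^ l * b (k - 1 - l) else 0)
    (bound := fun l => q ^ l * R)
    ((summable_geometric_of_lt_one hq0.le hq1).mul_right R) ?_ ?_
  · rw [tsum_zero] at hdom
    refine hdom.congr fun k => ?_
    rw [tsum_eq_sum (s := Finset.range k) (fun l hl => if_neg hl)]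
    exact Finset.sum_congr rfl fun l hl => if_pos hl
  · intro l
    have h1 : Tendsto (fun k : ℕ => k - 1 - l) atTop atTop := by
      simp_rw [Nat.sub_sub]
      exact tendsto_sub_atTop_nat (1 + l)
    have h2 := (hb.comp h1).const_mul (q ^ l)
    rw [mul_zero] at h2
    refine h2.congr' ?_
    filter_upwards [eventually_gt_atTop l] with k hk
    simp [hk]
  · refine Eventually.of_forall fun k l => ?_
    split_ifs
    · rw [norm_mul, norm_pow, Real.norm_of_nonneg hq0.le]
      gcongr
      exact hR' _
    · simpa using mul_nonneg (pow_nonneg hq0.le l) ((norm_nonneg _).trans (hR' 0))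

/-- A two-sided linear recursion driven by a null sequence converges to zero when the product of
the growth rates of the two factors is below one. -/
theorem tendsto_zero_of_recursion {ι κ : Type*} [Fintype ι] [DecidableEq ι] [Fintype κ]
    [DecidableEq κ] (S : Matrix ι ι ℝ) (T : Matrix κ κ ℝ) (s t c d : ℝ)
    (hs : 0 < s) (ht : 0 < t) (hc : 0 < c) (hst : s * t < 1)
    (hS : ∀ k : ℕ, ‖S ^ k‖ ≤ c * s ^ k) (hT : ∀ k : ℕ, ‖T ^ k‖ ≤ d * t ^ k)
    (V F : ℕ → Matrix ι κ ℝ) (hV : ∀ k, V (k + 1) = S * V k * T + F k)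
    (hF : Tendsto (fun k => ‖F k‖) atTop (𝓝 0)) :
    Tendsto (fun k => ‖V k‖) atTop (𝓝 0) := by
  have hbound : ∀ (k : ℕ) (M : Matrix ι κ ℝ),
      ‖S ^ k * M * T ^ k‖ ≤ c * d * ((s * t) ^ k * ‖M‖) := fun k M => calc
    ‖S ^ k * M * T ^ k‖ ≤ ‖S ^ k‖ * ‖M‖ * ‖T ^ k‖ :=
      (Matrix.frobenius_norm_mul _ _).trans
        (mul_le_mul_of_nonneg_right (Matrix.frobenius_norm_mul _ _) (norm_nonneg _))
    _ ≤ (c * s ^ k) * ‖M‖ * (d * t ^ k) := by gcongr <;> simp [hS, hT]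
    _ = c * d * ((s * t) ^ k * ‖M‖) := by rw [mul_pow]; ring
  have hsol : ∀ k, V k = S ^ k * V 0 * T ^ k +
      ∑ l ∈ Finset.range k, S ^ l * F (k - 1 - l) * T ^ l := by
    intro k
    induction k with
    | zero => simp
    | succ k ih =>
      rw [hV, ih, Finset.sum_range_succ', Matrix.mul_add, Matrix.add_mul, Matrix.mul_sum,
        Matrix.sum_mul, pow_succ' S k, pow_succ T k, add_assoc]
      congr 1
      · simp only [Matrix.mul_assoc]
      · simp only [pow_zero, Matrix.one_mul, Matrix.mul_one]
        congr 1
        refine Finset.sum_congr rfl fun l _ => ?_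
        rw [show k + 1 - 1 - (l + 1) = k - 1 - l by omega, pow_succ' S l, pow_succ T l]
        simp only [Matrix.mul_assoc]
  have hq0 : 0 < s * t := mul_pos hs ht
  have hlim : Tendsto (fun k => c * d * ((s * t) ^ k * ‖V 0‖) +
      c * d * ∑ l ∈ Finset.range k, (s * t) ^ l * ‖F (k - 1 - l)‖) atTop (𝓝 0) := by
    have h1 := ((tendsto_pow_atTop_nhds_zero_of_lt_one hq0.le hst).mul_const ‖V 0‖).const_mul
      (c * d)
    have h2 := (tendsto_geometric_convolution (s * t) hq0 hst _ hF).const_mul (c * d)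
    simpa using h1.add h2
  refine squeeze_zero (fun k => norm_nonneg _) (fun k => ?_) hlim
  rw [hsol k]
  refine (norm_add_le _ _).trans (add_le_add (hbound _ _) ?_)
  rw [Finset.mul_sum]
  exact (norm_sum_le _ _).trans (Finset.sum_le_sum fun l _ => hbound _ _)

theorem tendsto_norm_mul_mul {ι ι' κ κ' : Type*} [Fintype ι] [Fintype ι'] [Fintype κ] [Fintype κ']
    (S : Matrix ι' ι ℝ) (T : Matrix κ κ' ℝ) (F : ℕ → Matrix ι κ ℝ)
    (hF : Tendsto (fun k => ‖F k‖) atTop (𝓝 0)) :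
    Tendsto (fun k => ‖S * F k * T‖) atTop (𝓝 0) := by
  have h := (hF.const_mul ‖S‖).mul_const ‖T‖
  rw [mul_zero, zero_mul] at h
  exact squeeze_zero (fun k => norm_nonneg _) (fun k => (Matrix.frobenius_norm_mul _ _).trans
    (mul_le_mul_of_nonneg_right (Matrix.frobenius_norm_mul _ _) (norm_nonneg _))) h

theorem tendsto_entry {ι κ : Type*} [Fintype ι] [Fintype κ] (F : ℕ → Matrix ι κ ℝ)
    (hF : Tendsto (fun k => ‖F k‖) atTop (𝓝 0)) (i : ι) (l : κ) :
    Tendsto (fun k => F k i l) atTop (𝓝 0) := by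
  have h1 : Tendsto F atTop (𝓝 0) := tendsto_zero_iff_norm_tendsto_zero.2 hF
  have h2 : Continuous fun M : Matrix ι κ ℝ => M i l :=
    LinearMap.continuous_of_finiteDimensional (Matrix.entryLinearMap ℝ ℝ i l)
  exact (h2.tendsto 0).comp h1

/-! ### Disagreement with a reference agent -/

/-- Left multiplication by this matrix replaces every row by its difference with row `j`. -/
def disagreement {N : ℕ} (j : Fin N) : Matrix (Fin N) (Fin N) ℝ :=
  1 - Matrix.of fun _ l => if l = j then 1 else 0

theorem disagreement_mul_apply {N : ℕ} {κ : Type*} (j : Fin N) (M : Matrix (Fin N) κ ℝ)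
    (i : Fin N) (l : κ) : (disagreement j * M) i l = M i l - M j l := by
  rw [disagreement, Matrix.sub_mul, Matrix.one_mul, Matrix.sub_apply]
  simp [Matrix.mul_apply]

/-- Disagreements of `D M` depend only on disagreements of `M`, because rows of `D` have equal
sums. -/
theorem disagreement_mul_stochastic_mul {N : ℕ} {κ : Type*} (j : Fin N)
    (D : Matrix (Fin N) (Fin N) ℝ)
    (hDrow : ∀ i, ∑ j, D i j = 1) (M : Matrix (Fin N) κ ℝ) :
    disagreement j * (D * (disagreement j * M)) = disagreement j * (D * M) := by
  ext i l
  rw [disagreement_mul_apply, disagreement_mul_apply]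
  simp only [Matrix.mul_apply (M := D), disagreement_mul_apply, mul_sub, Finset.sum_sub_distrib,
    ← Finset.sum_mul, hDrow]
  ring

/-- Taking disagreements removes the eigenvalue `1` of `D`, carried by the all-ones vector, and
leaves a Schur stable matrix. -/
theorem norm_lt_one_of_disagreement {N : ℕ} (j : Fin N) (D : Matrix (Fin N) (Fin N) ℝ)
    (hDrow : ∀ i, ∑ j, D i j = 1)
    (hDsimple : Polynomial.rootMultiplicity (1 : ℂ)
        (Matrix.charpoly (D.map Complex.ofReal)) = 1)
    (hDspec : ∀ μ : ℂ, (∃ x : Fin N → ℂ, x ≠ 0 ∧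
        (D.map Complex.ofReal).mulVec x = μ • x) → μ ≠ 1 → ‖μ‖ < 1)
    (μ : ℂ) (hμ : ∃ z : Fin N → ℂ, z ≠ 0 ∧
        ((disagreement j * D).map Complex.ofReal).mulVec z = μ • z) : ‖μ‖ < 1 := by
  obtain ⟨z, hz, hz'⟩ := hμ
  set Dc : Matrix (Fin N) (Fin N) ℂ := D.map Complex.ofReal with hDc
  rcases eq_or_ne μ 0 with rfl | hμ0
  · simp
  have heq : ∀ i, (Dc *ᵥ z) i - (Dc *ᵥ z) j = μ * z i := by
    intro i
    have h := congrFun hz' i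
    simp only [Matrix.mulVec, dotProduct, Matrix.map_apply, disagreement_mul_apply, Pi.smul_apply,
      smul_eq_mul, Complex.ofReal_sub, sub_mul, Finset.sum_sub_distrib] at h
    simpa [hDc, Matrix.mulVec, dotProduct] using h
  have hzj : z j = 0 := by
    have h := heq j
    rw [sub_self] at h
    exact (mul_eq_zero.1 h.symm).resolve_left hμ0
  have hone : Dc *ᵥ (fun _ => 1) = fun _ => 1 := by
    ext i
    have h := congrArg Complex.ofReal (hDrow i)
    simpa [hDc, Matrix.mulVec, dotProduct] using h
  set a : ℂ := (Dc *ᵥ z) j with ha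
  have hDz : Dc *ᵥ z = μ • z + a • fun _ => 1 := by
    ext i
    have h := heq i
    simp only [Pi.add_apply, Pi.smul_apply, smul_eq_mul, mul_one]
    linear_combination h
  rcases eq_or_ne μ 1 with rfl | hμ1
  · -- `z` and the all-ones vector span a plane inside the generalized eigenspace at `1`.
    exfalso
    have hfin := LinearMap.finrank_genEigenspace_le (Matrix.toLin' Dc) 1 2
    rw [Matrix.charpoly_toLin', hDsimple] at hfin
    have hsub : (Matrix.toLin' Dc - (1 : ℂ) • 1) z = a • fun _ => 1 := by
      simp [hDz]
    have hsub1 : (Matrix.toLin' Dc - (1 : ℂ) • 1) (fun _ => 1) = 0 := by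
      simp [hone]
    have hmem1 : (fun _ => 1 : Fin N → ℂ) ∈ Module.End.genEigenspace (Matrix.toLin' Dc) 1 2 := by
      rw [show (2 : ℕ∞) = ((2 : ℕ) : ℕ∞) by rfl, Module.End.mem_genEigenspace_nat,
        LinearMap.mem_ker, pow_two, Module.End.mul_apply, hsub1, map_zero]
    have hmemz : z ∈ Module.End.genEigenspace (Matrix.toLin' Dc) 1 2 := by
      rw [show (2 : ℕ∞) = ((2 : ℕ) : ℕ∞) by rfl, Module.End.mem_genEigenspace_nat,
        LinearMap.mem_ker, pow_two, Module.End.mul_apply, hsub, map_smul, hsub1, smul_zero]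
    obtain ⟨w, hw⟩ := finrank_le_one_iff.1 hfin
    obtain ⟨c1, hc1⟩ := hw ⟨_, hmem1⟩
    obtain ⟨cz, hcz⟩ := hw ⟨_, hmemz⟩
    have h1 : c1 • (w : Fin N → ℂ) = fun _ => 1 := congrArg Subtype.val hc1
    have h2 : cz • (w : Fin N → ℂ) = z := congrArg Subtype.val hcz
    -- `w j ≠ 0` since a multiple of `w` is all ones, whereas `z j = 0`, so `z` is a zero multiple.
    have h1j : c1 * (w : Fin N → ℂ) j = 1 := congrFun h1 j
    have h2j : cz * (w : Fin N → ℂ) j = 0 := (congrFun h2 j).trans hzj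
    have hcz0 : cz = 0 :=
      (mul_eq_zero.1 h2j).resolve_right (right_ne_zero_of_mul (h1j.trans_ne one_ne_zero))
    exact hz (by rw [← h2, hcz0, zero_smul])
  · have hμ1' : μ - 1 ≠ 0 := sub_ne_zero.2 hμ1
    -- The shift `b` solves `a + b = μ b`.
    set b : ℂ := a / (μ - 1) with hb
    have hab : a + b = μ * b := by
      rw [hb]; field_simp; ring
    refine hDspec μ ⟨z + b • fun _ => 1, fun h0 => hz ?_, ?_⟩ hμ1
    · have hb0 : b = 0 := by simpa [hzj] using congrFun h0 j
      simpa [hb0] using h0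
    · rw [Matrix.mulVec_add, Matrix.mulVec_smul, hone, hDz, smul_add, smul_smul, ← hab, add_smul,
        add_assoc]

/-! ### The closed loop -/

/-- Synchronization for the closed loop written with one matrix row per agent. -/
theorem synchronization_of_matrix_dynamics {n m p N : ℕ}
    (A : Matrix (Fin n) (Fin n) ℝ) (B : Matrix (Fin n) (Fin m) ℝ)
    (C : Matrix (Fin p) (Fin n) ℝ)
    (K : Matrix (Fin m) (Fin n) ℝ) (H : Matrix (Fin n) (Fin p) ℝ)
    (hA : ∀ μ : ℂ, (∃ x : Fin n → ℂ, x ≠ 0 ∧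
        (A.map Complex.ofReal).mulVec x = μ • x) → ‖μ‖ ≤ 1)
    (hABK : ∀ μ : ℂ, (∃ x : Fin n → ℂ, x ≠ 0 ∧
        ((A - B * K).map Complex.ofReal).mulVec x = μ • x) → ‖μ‖ < 1)
    (hAHC : ∀ μ : ℂ, (∃ x : Fin n → ℂ, x ≠ 0 ∧
        ((A - H * C).map Complex.ofReal).mulVec x = μ • x) → ‖μ‖ < 1)
    (D : Matrix (Fin N) (Fin N) ℝ)
    (hDrow : ∀ i, ∑ j, D i j = 1)
    (hDsimple : Polynomial.rootMultiplicity (1 : ℂ)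
        (Matrix.charpoly (D.map Complex.ofReal)) = 1)
    (hDspec : ∀ μ : ℂ, (∃ x : Fin N → ℂ, x ≠ 0 ∧
        (D.map Complex.ofReal).mulVec x = μ • x) → μ ≠ 1 → ‖μ‖ < 1)
    (X Y Xh : ℕ → Matrix (Fin N) (Fin n) ℝ)
    (hX : ∀ k, X (k + 1) = X k * Aᵀ - Y k * (B * K)ᵀ)
    (hY : ∀ k, Y (k + 1) =
      Y k * Aᵀ - Y k * (B * K)ᵀ + Xh k * Aᵀ - (1 - D) * Y k * Aᵀ)
    (hXh : ∀ k, Xh (k + 1) = Xh k * Aᵀ - (1 - D) * Y k * (B * K)ᵀ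
      + ((1 - D) * (X k * Cᵀ) - Xh k * Cᵀ) * Hᵀ) (i j : Fin N) (l : Fin n) :
    Tendsto (fun k => X k i l - X k j l) atTop (𝓝 0) := by
  let E : ℕ → Matrix (Fin N) (Fin n) ℝ := fun k => (1 - D) * X k - Xh k
  have hE : ∀ k, E (k + 1) = (1 : Matrix (Fin N) (Fin N) ℝ) * E k * (A - H * C)ᵀ + 0 := by
    intro k
    simp only [E, hX, hXh, Matrix.transpose_sub, Matrix.transpose_mul, Matrix.mul_sub,
      Matrix.sub_mul, Matrix.one_mul, Matrix.mul_assoc]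
    abel
  let P := disagreement j
  let V : ℕ → Matrix (Fin N) (Fin n) ℝ := fun k => P * (X k - Y k)
  have hV : ∀ k, V (k + 1) = (P * D) * V k * Aᵀ + P * E k * Aᵀ := by
    intro k
    have h : (P * D) * V k = P * (D * (X k - Y k)) := by
      rw [Matrix.mul_assoc]
      exact disagreement_mul_stochastic_mul j D hDrow _
    rw [h]
    simp only [V, E, hX, hY, Matrix.mul_sub, Matrix.mul_add,
      Matrix.sub_mul, Matrix.one_mul, Matrix.mul_assoc]
    abel
  let W : ℕ → Matrix (Fin N) (Fin n) ℝ := fun k => P * X k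
  have hW : ∀ k, W (k + 1) = (1 : Matrix (Fin N) (Fin N) ℝ) * W k * (A - B * K)ᵀ + (1 : Matrix (Fin N) (Fin N) ℝ) * V k * (B * K)ᵀ := by
    intro k
    simp only [W, V, hX, Matrix.transpose_sub, Matrix.mul_sub,
      Matrix.sub_mul, Matrix.one_mul, Matrix.mul_assoc]
    abel
  obtain ⟨s, c, hs0, hs1, hc, hPD⟩ := exists_pow_norm_le (P * D) 1 one_pos
    (norm_lt_one_of_disagreement j D hDrow hDsimple hDspec)
  -- `A` may grow, but at a rate below `1 / s`, which the decay of `P * D` compensates.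
  obtain ⟨t, d, ht0, ht1, hd, hAt⟩ := exists_pow_transpose_norm_le A (1 / s) (by positivity)
    (fun μ h => (hA μ h).trans_lt ((one_lt_div hs0).2 hs1))
  obtain ⟨t₁, d₁, ht₁0, ht₁1, hd₁, hAHCt⟩ := exists_pow_transpose_norm_le _ 1 one_pos hAHC
  obtain ⟨t₂, d₂, ht₂0, ht₂1, hd₂, hABKt⟩ := exists_pow_transpose_norm_le _ 1 one_pos hABK
  have hst : s * t < 1 := by
    rw [mul_comm]
    exact (lt_div_iff₀ hs0).1 ht1
  obtain ⟨e, he, hone⟩ : ∃ e : ℝ, 0 < e ∧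
      ∀ k : ℕ, ‖(1 : Matrix (Fin N) (Fin N) ℝ) ^ k‖ ≤ e * 1 ^ k :=
    ⟨‖(1 : Matrix (Fin N) (Fin N) ℝ)‖ + 1, by positivity, fun k => by simp⟩
  have hE0 := tendsto_zero_of_recursion _ _ 1 t₁ e d₁ one_pos ht₁0 he (by linarith) hone hAHCt
    E _ hE (by simp)
  have hV0 := tendsto_zero_of_recursion _ _ s t c d hs0 ht0 hc hst hPD hAt V _ hV
    (tendsto_norm_mul_mul P Aᵀ E hE0)
  have hW0 := tendsto_zero_of_recursion _ _ 1 t₂ e d₂ one_pos ht₂0 he (by linarith) hone hABKt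
    W _ hW (tendsto_norm_mul_mul 1 (B * K)ᵀ V hV0)
  exact (tendsto_entry W hW0 i l).congr fun k => disagreement_mul_apply j (X k) i l

end

theorem partial_state_coupling_synchronization
    (n m p : ℕ)
    (A : Matrix (Fin n) (Fin n) ℝ) (B : Matrix (Fin n) (Fin m) ℝ)
    (C : Matrix (Fin p) (Fin n) ℝ)
    (K : Matrix (Fin m) (Fin n) ℝ) (H : Matrix (Fin n) (Fin p) ℝ)
    (hA : ∀ μ : ℂ, (∃ x : Fin n → ℂ, x ≠ 0 ∧
        (A.map Complex.ofReal).mulVec x = μ • x) → ‖μ‖ ≤ 1)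
    (hABK : ∀ μ : ℂ, (∃ x : Fin n → ℂ, x ≠ 0 ∧
        ((A - B * K).map Complex.ofReal).mulVec x = μ • x) → ‖μ‖ < 1)
    (hAHC : ∀ μ : ℂ, (∃ x : Fin n → ℂ, x ≠ 0 ∧
        ((A - H * C).map Complex.ofReal).mulVec x = μ • x) → ‖μ‖ < 1)
    (N : ℕ) (hN : 2 ≤ N)
    (D : Matrix (Fin N) (Fin N) ℝ)
    (hDpos : ∀ i j, 0 ≤ D i j)
    (hDrow : ∀ i, ∑ j, D i j = 1)
    (hDsimple : Polynomial.rootMultiplicity (1 : ℂ)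
        (Matrix.charpoly (D.map Complex.ofReal)) = 1)
    (hDspec : ∀ μ : ℂ, (∃ x : Fin N → ℂ, x ≠ 0 ∧
        (D.map Complex.ofReal).mulVec x = μ • x) → μ ≠ 1 → ‖μ‖ < 1)
    (x η xh : Fin N → ℕ → Fin n → ℝ)
    (hx : ∀ i k, x i (k + 1) = A.mulVec (x i k) + B.mulVec (-(K.mulVec (η i k))))
    (hη : ∀ i k, η i (k + 1) =
        A.mulVec (η i k) + B.mulVec (-(K.mulVec (η i k)))
          + A.mulVec (xh i k)
          - A.mulVec (∑ j, D i j • (η i k - η j k)))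
    (hxh : ∀ i k, xh i (k + 1) =
        A.mulVec (xh i k)
          - (B * K).mulVec (∑ j, D i j • (η i k - η j k))
          + H.mulVec ((∑ j, D i j • (C.mulVec (x i k) - C.mulVec (x j k)))
              - C.mulVec (xh i k))) :
    ∀ i j, Filter.Tendsto (fun k => x i k - x j k) Filter.atTop (nhds 0) := by
  let X : ℕ → Matrix (Fin N) (Fin n) ℝ := fun k => Matrix.of fun i => x i k
  let Y : ℕ → Matrix (Fin N) (Fin n) ℝ := fun k => Matrix.of fun i => η i k
  let Xh : ℕ → Matrix (Fin N) (Fin n) ℝ := fun k => Matrix.of fun i => xh i k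
  have hrow : ∀ {q r : ℕ} (Z : Matrix (Fin N) (Fin q) ℝ) (M : Matrix (Fin r) (Fin q) ℝ)
      (i : Fin N), (Z * Mᵀ).row i = M *ᵥ Z.row i := by
    intro q r Z M i
    ext l
    simp [Matrix.mul_apply, Matrix.mulVec, dotProduct, mul_comm]
  have hL : ∀ {q : ℕ} (Z : Matrix (Fin N) (Fin q) ℝ) (i : Fin N),
      Matrix.row ((1 - D) * Z) i = ∑ j, D i j • (Z.row i - Z.row j) := by
    intro q Z i
    ext l
    simp only [smul_sub, Finset.sum_sub_distrib, Matrix.sub_mul, Matrix.one_mul, Pi.sub_apply, Matrix.sub_apply, Finset.sum_apply,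
      Pi.smul_apply, smul_eq_mul, Matrix.mul_apply, Matrix.row_apply,
      ← Finset.sum_mul, hDrow, one_mul]
  have hadd : ∀ {q : ℕ} (Z Z' : Matrix (Fin N) (Fin q) ℝ) (i : Fin N),
      (Z + Z').row i = Z.row i + Z'.row i := fun _ _ _ => rfl
  have hsub : ∀ {q : ℕ} (Z Z' : Matrix (Fin N) (Fin q) ℝ) (i : Fin N),
      (Z - Z').row i = Z.row i - Z'.row i := fun _ _ _ => rfl
  have hXrow : ∀ i k, (X k).row i = x i k := fun _ _ => rfl
  have hYrow : ∀ i k, (Y k).row i = η i k := fun _ _ => rfl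
  have hXhrow : ∀ i k, (Xh k).row i = xh i k := fun _ _ => rfl
  have hX : ∀ k, X (k + 1) = X k * Aᵀ - Y k * (B * K)ᵀ := fun k => funext fun i => by
    change (X (k + 1)).row i = Matrix.row _ i
    simp only [hsub, hrow, hXrow, hYrow, hx, Matrix.mulVec_neg, Matrix.mulVec_mulVec,
      ← sub_eq_add_neg]
  have hY : ∀ k, Y (k + 1) = Y k * Aᵀ - Y k * (B * K)ᵀ + Xh k * Aᵀ - (1 - D) * Y k * Aᵀ :=
      fun k => funext fun i => by
    change (Y (k + 1)).row i = Matrix.row _ i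
    simp only [hsub, hadd, hrow, hL, hYrow, hXhrow, hη, Matrix.mulVec_neg, Matrix.mulVec_mulVec,
      ← sub_eq_add_neg]
  have hXh : ∀ k, Xh (k + 1) = Xh k * Aᵀ - (1 - D) * Y k * (B * K)ᵀ
      + ((1 - D) * (X k * Cᵀ) - Xh k * Cᵀ) * Hᵀ := fun k => funext fun i => by
    change (Xh (k + 1)).row i = Matrix.row _ i
    simp only [hsub, hadd, hrow, hL, hXrow, hYrow, hXhrow, hxh]
  intro i j
  refine tendsto_pi_nhds.2 fun l => ?_
  exact synchronization_of_matrix_dynamics A B C K H hA hABK hAHC D hDrow hDsimple hDspec X Y Xh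
    hX hY hXh i j l
end
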